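/- Let c ≥ 3 and b ≥ 1 be integers. The spectrum of the 2-down Laplacian δ₁(𝒯_{c,b}) δ₁(𝒯_{c,b})ᵀ, a square matrix of size C(c,3) + b·C(c,2), consists of the eigenvalue 0 with multiplicity C(c,3) + (b−1)·C(c−1,2), the eigenvalue c with multiplicity (b−1)(c−1), and the eigenvalue b + c with multiplicity C(c,2) (eigenvalues of multiplicity 0 being omitted). -/

import Mathlib

open Finset Matrix

/-- The sign `[T : e]` of an edge `e` in a triangle `T`. -/
noncomputable def triSign (T e : Finset ℕ) : ℝ :=
  if e ⊆ T ∧ e.card = 2 ∧ T.card = 3 then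
    if (T \ e).max = T.max ∨ (T \ e).min = T.min then 1 else -1
  else 0

/-- A triangle family: a nonempty finite set of 3-element subsets of ℕ. -/
def IsTriFam (F : Finset (Finset ℕ)) : Prop :=
  F.Nonempty ∧ ∀ T ∈ F, T.card = 3

/-- The edges of the support graph of a triangle family. -/
def edgesOf (F : Finset (Finset ℕ)) : Finset (Finset ℕ) :=
  F.biUnion fun T => T.powersetCard 2

/-- The vertices of the support graph of a triangle family. -/
def vertsOf (F : Finset (Finset ℕ)) : Finset ℕ :=
  F.biUnion id

/-- The signed edge-triangle incidence matrix of a triangle family. -/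
noncomputable def delta1 (F : Finset (Finset ℕ)) :
    Matrix {T // T ∈ F} {e // e ∈ edgesOf F} ℝ :=
  Matrix.of fun T e => triSign T.1 e.1

/-- The smallest positive eigenvalue of a matrix. -/
noncomputable def lambdaMinPos {m : Type*} [Fintype m] (M : Matrix m m ℝ) : ℝ :=
  sInf {μ : ℝ | 0 < μ ∧ ∃ v : m → ℝ, v ≠ 0 ∧ M.mulVec v = μ • v}

/-- `λ(𝒯)`: the smallest positive eigenvalue of `δ₁(𝒯)ᵀ δ₁(𝒯)`. -/
noncomputable def lam (F : Finset (Finset ℕ)) : ℝ :=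
  lambdaMinPos ((delta1 F)ᵀ * delta1 F)

/-- The neighborhood of `x` in the support graph `Γ₀(F)`. -/
def nbrs (F : Finset (Finset ℕ)) (x : ℕ) : Finset ℕ :=
  (vertsOf F).filter fun y => x ≠ y ∧ ∃ T ∈ F, x ∈ T ∧ y ∈ T

/-- `φ(t)`: the maximum of `λ(𝒯)` over triangle families with `|𝒯| = t`. -/
noncomputable def phi (t : ℕ) : ℝ :=
  sSup {r : ℝ | ∃ F : Finset (Finset ℕ), IsTriFam F ∧ F.card = t ∧ lam F = r}

/-- `Λ(t) = max_{1 ≤ s ≤ t} φ(s)`. -/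
noncomputable def Lam (t : ℕ) : ℝ :=
  sSup {r : ℝ | ∃ s : ℕ, 1 ≤ s ∧ s ≤ t ∧ phi s = r}

/-- `H(n) = min{ s ≥ 1 : φ(C(n,3)+s) > n - 1 }`. -/
noncomputable def Hfun (n : ℕ) : ℕ :=
  sInf {s : ℕ | 1 ≤ s ∧ (n : ℝ) - 1 < phi (n.choose 3 + s)}

/-- The triangle family `𝒯_{c,b}`: all 3-cliques of `K_c ∨ (b isolated vertices)`. -/
def Tcb (c b : ℕ) : Finset (Finset ℕ) :=
  ((Finset.Icc 1 c).powersetCard 3) ∪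
    (Finset.Icc (c+1) (c+b)).biUnion
      (fun i => ((Finset.Icc 1 c).powersetCard 2).image (fun p => insert i p))

/-- The sign of the pair `(x, y)`. -/
noncomputable def eps (x y : ℕ) : ℝ := if x < y then 1 else if y < x then -1 else 0

/-- The sign of the triple `(x, y, z)`. -/
noncomputable def eps3 (x y z : ℕ) : ℝ := eps x y * eps y z * eps x z

lemma mem_Tcb (c b x y z : ℕ) (hxy : x ≠ y) (hyz : y ≠ z) (hxz : x ≠ z) :
    ({x, y, z} : Finset ℕ) ∈ Tcb c b ↔
      (1 ≤ x ∧ 1 ≤ y ∧ 1 ≤ z) ∧ (x ≤ c + b ∧ y ≤ c + b ∧ z ≤ c + b) ∧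
      ((x ≤ c ∧ y ≤ c) ∨ (x ≤ c ∧ z ≤ c) ∨ (y ≤ c ∧ z ≤ c)) := by
  have h3 : ({x, y, z} : Finset ℕ).card = 3 := Finset.card_eq_three.2 ⟨x, y, z, hxy, hxz, hyz, rfl⟩
  unfold Tcb
  simp only [Finset.mem_union, Finset.mem_powersetCard, h3, Finset.mem_biUnion, Finset.mem_image,
    Finset.mem_Icc]
  constructor
  · rintro (⟨h, -⟩ | ⟨i, hi, p, ⟨hp, hp2⟩, he⟩)
    · have hx := h (show x ∈ _ by simp)
      have hy := h (show y ∈ _ by simp)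
      have hz := h (show z ∈ _ by simp)
      simp only [Finset.mem_Icc] at hx hy hz
      omega
    · have key : ∀ w ∈ ({x, y, z} : Finset ℕ), w = i ∨ (1 ≤ w ∧ w ≤ c) := by
        intro w hw
        rw [← he, Finset.mem_insert] at hw
        rcases hw with h | h
        · exact Or.inl h
        · exact Or.inr (Finset.mem_Icc.1 (hp h))
      have hx := key x (by simp)
      have hy := key y (by simp)
      have hz := key z (by simp)
      omega
  · rintro ⟨h1, h2, h⟩
    by_cases hall : x ≤ c ∧ y ≤ c ∧ z ≤ c
    · left
      refine ⟨?_, trivial⟩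
      intro w hw
      simp only [Finset.mem_insert, Finset.mem_singleton] at hw
      rw [Finset.mem_Icc]
      omega
    · right
      rcases h with h | h | h
      · refine ⟨z, by omega, {x, y}, ⟨?_, Finset.card_pair hxy⟩, by grind⟩
        intro w hw
        simp only [Finset.mem_insert, Finset.mem_singleton] at hw
        rw [Finset.mem_Icc]
        omega
      · refine ⟨y, by omega, {x, z}, ⟨?_, Finset.card_pair hxz⟩, by grind⟩
        intro w hw
        simp only [Finset.mem_insert, Finset.mem_singleton] at hw
        rw [Finset.mem_Icc]
        omega
      · refine ⟨x, by omega, {y, z}, ⟨?_, Finset.card_pair hyz⟩, by grind⟩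
        intro w hw
        simp only [Finset.mem_insert, Finset.mem_singleton] at hw
        rw [Finset.mem_Icc]
        omega

lemma card_of_mem (c b : ℕ) (T : Finset ℕ) (hT : T ∈ Tcb c b) : T.card = 3 := by
  unfold Tcb at hT
  simp only [Finset.mem_union, Finset.mem_powersetCard, Finset.mem_biUnion, Finset.mem_image,
    Finset.mem_Icc] at hT
  rcases hT with h | ⟨i, hi, p, ⟨hp, hp2⟩, he⟩
  · exact h.2
  · rw [← he, Finset.card_insert_of_notMem, hp2]
    intro h
    have := Finset.mem_Icc.1 (hp h)
    omega

lemma exists_sorted (T : Finset ℕ) (hT : T.card = 3) :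
    ∃ x y z, x < y ∧ y < z ∧ T = {x, y, z} := by
  obtain ⟨x, y, z, h1, h2, h3, rfl⟩ := Finset.card_eq_three.1 hT
  rcases lt_or_gt_of_ne h1 with a | a <;> rcases lt_or_gt_of_ne h2 with b | b <;>
    rcases lt_or_gt_of_ne h3 with d | d
  · exact ⟨x, y, z, a, d, rfl⟩
  · exact ⟨x, z, y, b, d, by grind⟩
  · omega
  · exact ⟨z, x, y, b, a, by grind⟩
  · exact ⟨y, x, z, a, b, by grind⟩
  · omega
  · exact ⟨y, z, x, d, b, by grind⟩
  · exact ⟨z, y, x, d, a, by grind⟩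

lemma triSign_eq (x y z : ℕ) (hxy : x ≠ y) (hyz : y ≠ z) (hxz : x ≠ z) :
    triSign {x, y, z} {x, y} = eps y z * eps x z := by
  have h3 : ({x, y, z} : Finset ℕ).card = 3 := Finset.card_eq_three.2 ⟨x, y, z, hxy, hxz, hyz, rfl⟩
  have hd : ({x, y, z} : Finset ℕ) \ {x, y} = {z} := by grind
  unfold triSign
  rw [if_pos ⟨by grind, Finset.card_pair hxy, h3⟩, hd]
  have hmax : (({z} : Finset ℕ).max = ({x, y, z} : Finset ℕ).max) ↔ x < z ∧ y < z := by
    rw [Finset.max_singleton, eq_comm]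
    simp only [Finset.max_insert, Finset.max_singleton]
    rw [← WithBot.coe_max, ← WithBot.coe_max, WithBot.coe_inj]
    omega
  have hmin : (({z} : Finset ℕ).min = ({x, y, z} : Finset ℕ).min) ↔ z < x ∧ z < y := by
    rw [Finset.min_singleton, eq_comm]
    simp only [Finset.min_insert, Finset.min_singleton]
    rw [← WithTop.coe_min, ← WithTop.coe_min, WithTop.coe_inj]
    omega
  simp only [hmax, hmin]
  unfold eps
  split_ifs <;> first | omega | norm_num

lemma triSign_zero (T e : Finset ℕ) (h : ¬ e ⊆ T) : triSign T e = 0 := by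
  unfold triSign
  rw [if_neg (fun h' => h h'.1)]

/-- Extension by zero. -/
noncomputable def ext0 (F : Finset (Finset ℕ)) (h : {T // T ∈ F} → ℝ) (T : Finset ℕ) : ℝ :=
  if hT : T ∈ F then h ⟨T, hT⟩ else 0

/-- Alternating version of a 2-chain. -/
noncomputable def hat (F : Finset (Finset ℕ)) (h : {T // T ∈ F} → ℝ) (x y z : ℕ) : ℝ :=
  eps3 x y z * ext0 F h {x, y, z}

/-- Alternating version of the boundary of a 2-chain. -/
noncomputable def bd (c b : ℕ) (h : {T // T ∈ Tcb c b} → ℝ) (x y : ℕ) : ℝ :=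
  ∑ z ∈ Finset.Icc 1 (c + b), hat (Tcb c b) h x y z

lemma eps_swap (x y : ℕ) : eps x y = - eps y x := by
  unfold eps; split_ifs <;> first | omega | norm_num

lemma eps_self (x : ℕ) : eps x x = 0 := by simp [eps]

lemma hat_swap (F : Finset (Finset ℕ)) (h : {T // T ∈ F} → ℝ) (x y z : ℕ) :
    hat F h x y z = - hat F h y x z := by
  unfold hat eps3
  rw [Finset.insert_comm x y, eps_swap x y]; ring

lemma hat_swap' (F : Finset (Finset ℕ)) (h : {T // T ∈ F} → ℝ) (x y z : ℕ) :
    hat F h x y z = - hat F h x z y := by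
  unfold hat eps3
  rw [Finset.pair_comm y z, eps_swap y z]; ring

lemma hat_self (F : Finset (Finset ℕ)) (h : {T // T ∈ F} → ℝ) (x y : ℕ) :
    hat F h x x y = 0 := by
  simp [hat, eps3, eps_self]

lemma bd_swap (c b : ℕ) (h : {T // T ∈ Tcb c b} → ℝ) (x y : ℕ) :
    bd c b h x y = - bd c b h y x := by
  unfold bd
  rw [← Finset.sum_neg_distrib]
  exact Finset.sum_congr rfl fun z _ => hat_swap _ _ _ _ _

lemma bd_self (c b : ℕ) (h : {T // T ∈ Tcb c b} → ℝ) (x : ℕ) : bd c b h x x = 0 := by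
  have := bd_swap c b h x x
  linarith

lemma bd_div (c b : ℕ) (h : {T // T ∈ Tcb c b} → ℝ) (x : ℕ) :
    ∑ y ∈ Finset.Icc 1 (c + b), bd c b h x y = 0 := by
  have h1 : ∑ y ∈ Finset.Icc 1 (c + b), bd c b h x y
      = - ∑ y ∈ Finset.Icc 1 (c + b), bd c b h x y := by
    conv_lhs => unfold bd
    rw [Finset.sum_comm, ← Finset.sum_neg_distrib]
    refine Finset.sum_congr rfl fun y _ => ?_
    unfold bd
    rw [← Finset.sum_neg_distrib]
    exact Finset.sum_congr rfl fun z _ => hat_swap' _ _ _ _ _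
  linarith

lemma bd_sub (c b : ℕ) (h k : {T // T ∈ Tcb c b} → ℝ) (r : ℝ) (x y : ℕ) :
    bd c b (h - r • k) x y = bd c b h x y - r * bd c b k x y := by
  unfold bd
  rw [Finset.mul_sum, ← Finset.sum_sub_distrib]
  refine Finset.sum_congr rfl fun z _ => ?_
  unfold hat ext0
  split_ifs
  · simp only [Pi.sub_apply, Pi.smul_apply, smul_eq_mul]; ring
  · ring

lemma bd_zero_of_large (c b : ℕ) (h : {T // T ∈ Tcb c b} → ℝ) (x y : ℕ) (hx : c < x) (hy : c < y) :
    bd c b h x y = 0 := by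
  rcases eq_or_ne x y with rfl | hxy
  · exact bd_self _ _ _ _
  unfold bd
  refine Finset.sum_eq_zero fun z _ => ?_
  unfold hat
  rcases eq_or_ne x z with rfl | hxz
  · simp [eps3, eps_self]
  rcases eq_or_ne y z with rfl | hyz
  · simp [eps3, eps_self]
  unfold ext0
  rw [dif_neg, mul_zero]
  rw [mem_Tcb c b x y z hxy hyz hxz]
  omega

lemma transpose_apply_eq (c b : ℕ) (h : {T // T ∈ Tcb c b} → ℝ) (x y : ℕ) (hxy : x < y) :
    ∑ T : {T // T ∈ Tcb c b}, triSign T.1 {x, y} * h T = bd c b h x y := by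
  have e1 : ∑ T : {T // T ∈ Tcb c b}, triSign T.1 {x, y} * h T
      = ∑ T ∈ Tcb c b, triSign T {x, y} * ext0 (Tcb c b) h T := by
    rw [← Finset.sum_coe_sort (Tcb c b)]
    refine Finset.sum_congr rfl fun T _ => ?_
    simp [ext0]
  rw [e1]
  unfold bd
  symm
  have hsub : ∀ z, hat (Tcb c b) h x y z ≠ 0 → x ≠ z ∧ y ≠ z ∧ ({x, y, z} : Finset ℕ) ∈ Tcb c b := by
    intro z hz
    refine ⟨?_, ?_, ?_⟩
    · rintro rfl; exact hz (by simp [hat, eps3, eps_self])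
    · rintro rfl; exact hz (by simp [hat, eps3, eps_self])
    · by_contra hh
      exact hz (by simp [hat, ext0, hh])
  refine Finset.sum_bij_ne_zero (fun z _ _ => ({x, y, z} : Finset ℕ)) ?_ ?_ ?_ ?_
  · intro z _ hz
    exact (hsub z hz).2.2
  · intro z _ hz w _ hw he
    have h1 := hsub z hz
    have : z ∈ ({x, y, w} : Finset ℕ) := by rw [← he]; simp
    simp only [Finset.mem_insert, Finset.mem_singleton] at this
    rcases this with h | h | h
    · exact absurd h.symm h1.1
    · exact absurd h.symm h1.2.1
    · exact h
  · intro T hT hne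
    have hs : ({x, y} : Finset ℕ) ⊆ T := by
      by_contra hh
      exact hne (by rw [triSign_zero _ _ hh, zero_mul])
    have hc3 := card_of_mem c b T hT
    have hcd : (T \ {x, y}).card = 1 := by
      rw [Finset.card_sdiff_of_subset hs, hc3, Finset.card_pair hxy.ne]
    obtain ⟨z, hz⟩ := Finset.card_eq_one.1 hcd
    have hTe : T = {x, y, z} := by
      rw [← Finset.sdiff_union_of_subset hs, hz]; grind
    have hzn : z ∉ ({x, y} : Finset ℕ) := by
      have : z ∈ T \ {x, y} := by rw [hz]; simp
      exact (Finset.mem_sdiff.1 this).2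
    simp only [Finset.mem_insert, Finset.mem_singleton, not_or] at hzn
    have hm := hT
    rw [hTe, mem_Tcb c b x y z hxy.ne (Ne.symm hzn.2) (Ne.symm hzn.1)] at hm
    refine ⟨z, by rw [Finset.mem_Icc]; omega, ?_, hTe.symm⟩
    rw [hTe, triSign_eq x y z hxy.ne (Ne.symm hzn.2) (Ne.symm hzn.1)] at hne
    have : eps x y = 1 := by simp [eps, hxy]
    unfold hat eps3
    rw [this, one_mul]
    exact hne
  · intro z _ hz
    obtain ⟨h1, h2, h3⟩ := hsub z hz
    rw [triSign_eq x y z hxy.ne h2 h1]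
    have : eps x y = 1 := by simp [eps, hxy]
    unfold hat eps3
    rw [this, one_mul]

lemma sum_edges (c b : ℕ) (g : Finset ℕ → ℝ) (x y z : ℕ) (hxy : x < y) (hyz : y < z)
    (hT : ({x, y, z} : Finset ℕ) ∈ Tcb c b) :
    ∑ e : {e // e ∈ edgesOf (Tcb c b)}, triSign {x, y, z} e.1 * g e.1
      = g {x, y} + g {y, z} - g {x, z} := by
  have hxz := hxy.trans hyz
  rw [Finset.sum_coe_sort (edgesOf (Tcb c b)) (fun e => triSign {x, y, z} e * g e)]
  have hp : ({x, y, z} : Finset ℕ).powersetCard 2 = {{x, y}, {y, z}, {x, z}} := by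
    symm
    apply Finset.eq_of_subset_of_card_le
    · intro e he
      simp only [Finset.mem_insert, Finset.mem_singleton] at he
      rw [Finset.mem_powersetCard]
      rcases he with rfl | rfl | rfl
      · exact ⟨by grind, Finset.card_pair hxy.ne⟩
      · exact ⟨by grind, Finset.card_pair hyz.ne⟩
      · exact ⟨by grind, Finset.card_pair hxz.ne⟩
    · rw [Finset.card_powersetCard, card_of_mem c b _ hT]
      rw [Finset.card_eq_three.2 ⟨_, _, _, ?_, ?_, ?_, rfl⟩]
      · decide
      · intro h; have : x ∈ ({y, z} : Finset ℕ) := by rw [← h]; simp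
        simp at this; omega
      · intro h; have : y ∈ ({x, z} : Finset ℕ) := by rw [← h]; simp
        simp at this; omega
      · intro h; have : x ∈ ({y, z} : Finset ℕ) := by rw [h]; simp
        simp at this; omega
  rw [← Finset.sum_subset (s₁ := ({x, y, z} : Finset ℕ).powersetCard 2)]
  · rw [hp, Finset.sum_insert, Finset.sum_insert, Finset.sum_singleton]
    · rw [triSign_eq x y z hxy.ne hyz.ne hxz.ne]
      rw [show ({x, y, z} : Finset ℕ) = {y, z, x} by grind, triSign_eq y z x hyz.ne hxz.ne' hxy.ne']
      rw [show ({y, z, x} : Finset ℕ) = {x, z, y} by grind, triSign_eq x z y hxz.ne hyz.ne' hxy.ne]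
      simp [eps, hxy, hyz, hxz, hxy.not_gt, hyz.not_gt, hxz.not_gt]
      ring
    · intro h
      rw [Finset.mem_singleton] at h
      have : y ∈ ({x, z} : Finset ℕ) := by rw [← h]; simp
      simp at this; omega
    · intro h
      simp only [Finset.mem_insert, Finset.mem_singleton] at h
      rcases h with h | h
      · have : x ∈ ({y, z} : Finset ℕ) := by rw [← h]; simp
        simp at this; omega
      · have : y ∈ ({x, z} : Finset ℕ) := by rw [← h]; simp
        simp at this; omega
  · intro e he
    exact Finset.mem_biUnion.2 ⟨_, hT, he⟩
  · intro e he hne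
    obtain ⟨T', hT', he'⟩ := Finset.mem_biUnion.1 he
    rw [triSign_zero, zero_mul]
    intro hs
    exact hne (Finset.mem_powersetCard.2 ⟨hs, (Finset.mem_powersetCard.1 he').2⟩)

/-- The 2-down Laplacian. -/
noncomputable abbrev Mcb (c b : ℕ) : Matrix {T // T ∈ Tcb c b} {T // T ∈ Tcb c b} ℝ :=
  delta1 (Tcb c b) * (delta1 (Tcb c b))ᵀ

lemma M_apply (c b : ℕ) (h : {T // T ∈ Tcb c b} → ℝ) (x y z : ℕ) (hxy : x < y) (hyz : y < z)
    (hT : ({x, y, z} : Finset ℕ) ∈ Tcb c b) :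
    (Mcb c b *ᵥ h) ⟨_, hT⟩ = bd c b h x y + bd c b h y z + bd c b h z x := by
  rw [Mcb, ← Matrix.mulVec_mulVec]
  have := sum_edges c b (fun e => ∑ T : {T // T ∈ Tcb c b}, triSign T.1 e * h T) x y z hxy hyz hT
  simp only [transpose_apply_eq c b h x y hxy, transpose_apply_eq c b h y z hyz,
    transpose_apply_eq c b h x z (hxy.trans hyz)] at this
  rw [bd_swap c b h z x, ← sub_eq_add_neg, ← this]
  rfl

lemma hat_M (c b : ℕ) (h : {T // T ∈ Tcb c b} → ℝ) (x y z : ℕ) (hxy : x ≠ y) (hyz : y ≠ z)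
    (hxz : x ≠ z) (hT : ({x, y, z} : Finset ℕ) ∈ Tcb c b) :
    hat (Tcb c b) (Mcb c b *ᵥ h) x y z = bd c b h x y + bd c b h y z + bd c b h z x := by
  have key : ∀ x y z : ℕ, x < y → y < z → ({x, y, z} : Finset ℕ) ∈ Tcb c b →
      hat (Tcb c b) (Mcb c b *ᵥ h) x y z = bd c b h x y + bd c b h y z + bd c b h z x := by
    intro x y z hxy hyz hT
    have hxz := hxy.trans hyz
    unfold hat ext0
    rw [dif_pos hT, M_apply c b h x y z hxy hyz hT]
    simp [eps3, eps, hxy, hyz, hxz]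
  have s1 := bd_swap c b h x y
  have s2 := bd_swap c b h y z
  have s3 := bd_swap c b h z x
  have w : ∀ s : Finset ℕ, s = {x, y, z} → s ∈ Tcb c b := fun s hs => hs ▸ hT
  rcases lt_or_gt_of_ne hxy with p | p <;> rcases lt_or_gt_of_ne hyz with q | q <;>
    rcases lt_or_gt_of_ne hxz with r | r
  · exact key x y z p q hT
  · omega
  · rw [hat_swap', key x z y r q (w _ (by grind))]; linarith
  · rw [hat_swap', hat_swap, key z x y r p (w _ (by grind))]; linarith
  · rw [hat_swap, key y x z p r (w _ (by grind))]; linarith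
  · rw [hat_swap, hat_swap', key y z x q r (w _ (by grind))]; linarith
  · omega
  · rw [hat_swap, hat_swap', hat_swap, key z y x q p (w _ (by grind))]; linarith

lemma hat_not_mem (F : Finset (Finset ℕ)) (h : {T // T ∈ F} → ℝ) (x y z : ℕ)
    (hT : ({x, y, z} : Finset ℕ) ∉ F) : hat F h x y z = 0 := by
  simp [hat, ext0, hT]

lemma bd_M_KK (c b : ℕ) (h : {T // T ∈ Tcb c b} → ℝ) (x y : ℕ) (hxy : x ≠ y)
    (hx : 1 ≤ x ∧ x ≤ c) (hy : 1 ≤ y ∧ y ≤ c) :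
    bd c b (Mcb c b *ᵥ h) x y = ((b : ℝ) + c) * bd c b h x y := by
  have e : ∀ z ∈ Finset.Icc 1 (c + b), hat (Tcb c b) (Mcb c b *ᵥ h) x y z
      = bd c b h x y + bd c b h y z - bd c b h x z := by
    intro z hz
    rw [Finset.mem_Icc] at hz
    rcases eq_or_ne x z with rfl | hxz
    · rw [hat_swap', hat_self, bd_self, bd_swap c b h x y]; ring
    rcases eq_or_ne y z with rfl | hyz
    · rw [bd_self]; simp [hat, eps3, eps_self]
    rw [hat_M c b h x y z hxy hyz hxz, bd_swap c b h z x]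
    · ring
    · rw [mem_Tcb c b x y z hxy hyz hxz]; omega
  conv_lhs => unfold bd
  rw [Finset.sum_congr rfl e, Finset.sum_sub_distrib, Finset.sum_add_distrib, bd_div, bd_div]
  simp only [Finset.sum_const, Nat.card_Icc, nsmul_eq_mul, Nat.add_sub_cancel]
  push_cast
  ring

lemma Icc_split (c b : ℕ) (f : ℕ → ℝ) : ∑ z ∈ Finset.Icc 1 (c + b), f z
    = ∑ z ∈ Finset.Icc 1 c, f z + ∑ z ∈ Finset.Icc (c + 1) (c + b), f z := by
  rw [← Finset.sum_union]
  · congr 1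
    ext z; simp only [Finset.mem_union, Finset.mem_Icc]; omega
  · rw [Finset.disjoint_left]
    intro z; simp only [Finset.mem_Icc]; omega

lemma bd_M_KB (c b : ℕ) (h : {T // T ∈ Tcb c b} → ℝ) (x u : ℕ)
    (hx : 1 ≤ x ∧ x ≤ c) (hu : c + 1 ≤ u ∧ u ≤ c + b) :
    bd c b (Mcb c b *ᵥ h) x u
      = c * bd c b h x u + ∑ v ∈ Finset.Icc (c + 1) (c + b), bd c b h x v := by
  have hxu : x ≠ u := by omega
  have e : ∀ z ∈ Finset.Icc 1 c, hat (Tcb c b) (Mcb c b *ᵥ h) x u z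
      = bd c b h x u + bd c b h u z - bd c b h x z := by
    intro z hz
    rw [Finset.mem_Icc] at hz
    rcases eq_or_ne x z with rfl | hxz
    · rw [hat_swap', hat_self, bd_self, bd_swap c b h x u]; ring
    have huz : u ≠ z := by omega
    rw [hat_M c b h x u z hxu huz hxz, bd_swap c b h z x]
    · ring
    · rw [mem_Tcb c b x u z hxu huz hxz]; omega
  have e' : ∀ z ∈ Finset.Icc (c + 1) (c + b), hat (Tcb c b) (Mcb c b *ᵥ h) x u z = 0 := by
    intro z hz
    rw [Finset.mem_Icc] at hz
    rcases eq_or_ne u z with rfl | huz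
    · simp [hat, eps3, eps_self]
    apply hat_not_mem
    rw [mem_Tcb c b x u z hxu huz (by omega)]; omega
  have d1 := bd_div c b h x
  have d2 := bd_div c b h u
  rw [Icc_split] at d1 d2
  have d3 : ∑ z ∈ Finset.Icc (c + 1) (c + b), bd c b h u z = 0 := by
    refine Finset.sum_eq_zero fun z hz => ?_
    rw [Finset.mem_Icc] at hz
    exact bd_zero_of_large c b h u z (by omega) (by omega)
  conv_lhs => unfold bd
  rw [Icc_split, Finset.sum_congr rfl e, Finset.sum_eq_zero e', Finset.sum_sub_distrib,
    Finset.sum_add_distrib]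
  simp only [Finset.sum_const, Nat.card_Icc, nsmul_eq_mul, Nat.add_sub_cancel]
  linarith

lemma M_cubic (c b : ℕ) (h : {T // T ∈ Tcb c b} → ℝ) (k k' : {T // T ∈ Tcb c b} → ℝ)
    (hk : k = Mcb c b *ᵥ h - ((b : ℝ) + c) • h) (hk' : k' = Mcb c b *ᵥ k - (c : ℝ) • k) :
    Mcb c b *ᵥ k' = 0 := by
  have KK : ∀ x y, x ≠ y → (1 ≤ x ∧ x ≤ c) → (1 ≤ y ∧ y ≤ c) → bd c b k' x y = 0 := by
    intro x y hxy hx hy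
    rw [hk', bd_sub, bd_M_KK c b k x y hxy hx hy, hk, bd_sub, bd_M_KK c b h x y hxy hx hy]
    ring
  have KB : ∀ x u, (1 ≤ x ∧ x ≤ c) → (c + 1 ≤ u ∧ u ≤ c + b) → bd c b k' x u = 0 := by
    intro x u hx hu
    rw [hk', bd_sub, bd_M_KB c b k x u hx hu]
    have : ∀ v ∈ Finset.Icc (c + 1) (c + b), bd c b k x v
        = ∑ v ∈ Finset.Icc (c + 1) (c + b), bd c b h x v - b * bd c b h x v := by
      intro v hv
      rw [Finset.mem_Icc] at hv
      rw [hk, bd_sub, bd_M_KB c b h x v hx hv]; ring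
    rw [Finset.sum_congr rfl this, Finset.sum_sub_distrib, ← Finset.mul_sum]
    simp
  funext ⟨T, hT⟩
  obtain ⟨x, y, z, hxy, hyz, rfl⟩ := exists_sorted T (card_of_mem c b T hT)
  rw [M_apply c b k' x y z hxy hyz hT, bd_swap c b k' z x]
  rw [mem_Tcb c b x y z hxy.ne hyz.ne (by omega)] at hT
  rw [KK x y (by omega) (by omega) (by omega)]
  rcases le_or_gt z c with hz | hz
  · rw [KK y z (by omega) (by omega) (by omega), KK x z (by omega) (by omega) (by omega)]; simp
  · rw [KB y z (by omega) (by omega), KB x z (by omega) (by omega)]; simp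

lemma bd_single (c b : ℕ) (x y z : ℕ) (hxy : x ≠ y) (hyz : y ≠ z) (hxz : x ≠ z)
    (hT : ({x, y, z} : Finset ℕ) ∈ Tcb c b) :
    bd c b (Pi.single ⟨_, hT⟩ 1) x y = eps3 x y z := by
  unfold bd
  rw [Finset.sum_eq_single z]
  · simp [hat, ext0, hT]
  · intro w _ hw
    unfold hat ext0
    split_ifs with hm
    · rw [Pi.single_eq_of_ne, mul_zero]
      intro he
      have he := congrArg Subtype.val he
      simp only at he
      have : z ∈ ({x, y, w} : Finset ℕ) := by rw [he]; simp
      simp only [Finset.mem_insert, Finset.mem_singleton] at this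
      omega
    · ring
  · intro hz
    exfalso; apply hz
    rw [mem_Tcb c b x y z hxy hyz hxz] at hT
    rw [Finset.mem_Icc]; omega

lemma bd_single' (c b : ℕ) (T : Finset ℕ) (hT : T ∈ Tcb c b) (x y : ℕ) (hy : y ∉ T) :
    bd c b (Pi.single ⟨_, hT⟩ 1) x y = 0 := by
  unfold bd
  refine Finset.sum_eq_zero fun w _ => ?_
  unfold hat ext0
  split_ifs with hm
  · rw [Pi.single_eq_of_ne, mul_zero]
    intro he
    have he := congrArg Subtype.val he
    simp only at he
    apply hy
    rw [← he]; simp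
  · ring

lemma bd_single_all (c b : ℕ) (x y z : ℕ) (hxy : x < y) (hyz : y < z)
    (hT : ({x, y, z} : Finset ℕ) ∈ Tcb c b) :
    bd c b (Pi.single ⟨_, hT⟩ 1) x y = 1 ∧ bd c b (Pi.single ⟨_, hT⟩ 1) y z = 1 ∧
    bd c b (Pi.single ⟨_, hT⟩ 1) x z = -1 := by
  have hxz := hxy.trans hyz
  have cg : ∀ (S : Finset ℕ) (hS : S ∈ Tcb c b), S = {x, y, z} →
      (Pi.single ⟨_, hT⟩ 1 : {T // T ∈ Tcb c b} → ℝ) = Pi.single ⟨S, hS⟩ 1 := by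
    rintro S hS rfl; rfl
  have h2 : ({y, z, x} : Finset ℕ) = {x, y, z} := by grind
  have h3 : ({x, z, y} : Finset ℕ) = {x, y, z} := by grind
  refine ⟨?_, ?_, ?_⟩
  · rw [bd_single c b x y z hxy.ne hyz.ne hxz.ne hT]; simp [eps3, eps, hxy, hyz, hxz]
  · rw [cg _ (h2 ▸ hT) h2, bd_single c b y z x hyz.ne hxz.ne' hxy.ne']
    simp [eps3, eps, hxy, hyz, hxz, hxy.not_gt, hxz.not_gt]
  · rw [cg _ (h3 ▸ hT) h3, bd_single c b x z y hxz.ne hyz.ne' hxy.ne]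
    simp [eps3, eps, hxy, hyz, hxz, hyz.not_gt]

lemma M_diag (c b : ℕ) (T : {T // T ∈ Tcb c b}) : Mcb c b T T = 3 := by
  obtain ⟨T, hT⟩ := T
  obtain ⟨x, y, z, hxy, hyz, rfl⟩ := exists_sorted T (card_of_mem c b T hT)
  have := M_apply c b (Pi.single ⟨_, hT⟩ 1) x y z hxy hyz hT
  rw [bd_swap c b _ z x] at this
  obtain ⟨h1, h2, h3⟩ := bd_single_all c b x y z hxy hyz hT
  rw [h1, h2, h3, Matrix.mulVec_single_one] at this
  rw [show Mcb c b ⟨_, hT⟩ ⟨_, hT⟩ = (Mcb c b).col ⟨_, hT⟩ ⟨_, hT⟩ from rfl, this]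
  norm_num

lemma M2_diag (c b : ℕ) (T : {T // T ∈ Tcb c b}) : (Mcb c b * Mcb c b) T T =
    if T.1 ∈ (Finset.Icc 1 c).powersetCard 3 then 3 * ((b : ℝ) + c) else (b : ℝ) + c + 2 * c + 2 := by
  obtain ⟨T, hT⟩ := T
  obtain ⟨x, y, z, hxy, hyz, rfl⟩ := exists_sorted T (card_of_mem c b T hT)
  have := M_apply c b (Mcb c b *ᵥ Pi.single ⟨_, hT⟩ 1) x y z hxy hyz hT
  rw [bd_swap c b _ z x] at this
  obtain ⟨h1, h2, h3⟩ := bd_single_all c b x y z hxy hyz hT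
  rw [Matrix.mulVec_mulVec, Matrix.mulVec_single_one] at this
  rw [show (Mcb c b * Mcb c b) ⟨_, hT⟩ ⟨_, hT⟩ = (Mcb c b * Mcb c b).col ⟨_, hT⟩ ⟨_, hT⟩ from rfl,
    this]
  have hm := hT
  rw [mem_Tcb c b x y z hxy.ne hyz.ne (by omega)] at hm
  rw [bd_M_KK c b _ x y (by omega) (by omega) (by omega), h1]
  rcases le_or_gt z c with hz | hz
  · rw [if_pos, bd_M_KK c b _ y z (by omega) (by omega) (by omega),
      bd_M_KK c b _ x z (by omega) (by omega) (by omega), h2, h3]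
    · ring
    · rw [Finset.mem_powersetCard]
      refine ⟨?_, card_of_mem c b _ hT⟩
      intro w hw
      simp only [Finset.mem_insert, Finset.mem_singleton] at hw
      rw [Finset.mem_Icc]
      omega
  · rw [if_neg, bd_M_KB c b _ y z (by omega) (by omega),
      bd_M_KB c b _ x z (by omega) (by omega), h2, h3]
    · have S : ∀ w, ∑ v ∈ Finset.Icc (c + 1) (c + b), bd c b (Pi.single ⟨_, hT⟩ 1) w v
          = bd c b (Pi.single ⟨_, hT⟩ 1) w z := by
        intro w
        refine Finset.sum_eq_single z ?_ ?_
        · intro v hv hvz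
          rw [Finset.mem_Icc] at hv
          apply bd_single'
          simp only [Finset.mem_insert, Finset.mem_singleton]
          omega
        · intro h; exfalso; apply h; rw [Finset.mem_Icc]; omega
      rw [S, S, h2, h3]; ring
    · intro h
      have := (Finset.mem_powersetCard.1 h).1 (show z ∈ _ by simp)
      rw [Finset.mem_Icc] at this
      omega

/-- The triangles that use one of the isolated vertices. -/
def Bcb (c b : ℕ) : Finset (Finset ℕ) :=
  (Finset.Icc (c+1) (c+b)).biUnion
      (fun i => ((Finset.Icc 1 c).powersetCard 2).image (fun p => insert i p))

lemma Bcb_big (c b : ℕ) (T : Finset ℕ) (hT : T ∈ Bcb c b) : T ∉ (Finset.Icc 1 c).powersetCard 3 := by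
  unfold Bcb at hT
  simp only [Finset.mem_biUnion, Finset.mem_image, Finset.mem_Icc] at hT
  obtain ⟨i, hi, p, hp, rfl⟩ := hT
  intro h
  have := Finset.mem_Icc.1 ((Finset.mem_powersetCard.1 h).1 (Finset.mem_insert_self i p))
  omega

lemma Tcb_disj (c b : ℕ) : Disjoint ((Finset.Icc 1 c).powersetCard 3) (Bcb c b) := by
  rw [Finset.disjoint_right]
  exact fun T hT => Bcb_big c b T hT

lemma card_Bcb (c b : ℕ) : (Bcb c b).card = b * c.choose 2 := by
  have hni : ∀ i ∈ Finset.Icc (c+1) (c+b), ∀ p ∈ (Finset.Icc 1 c).powersetCard 2, ∀ j, c < j → j ∈ insert i p → j = i := by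
    intro i hi p hp j hj h
    rcases Finset.mem_insert.1 h with h | h
    · exact h
    · have := Finset.mem_Icc.1 ((Finset.mem_powersetCard.1 hp).1 h)
      omega
  unfold Bcb
  rw [Finset.card_biUnion]
  · rw [Finset.sum_congr rfl (g := fun _ => c.choose 2)]
    · simp
    · intro i hi
      rw [Finset.card_image_of_injOn]
      · simp
      · intro p hp q hq he
        have hip : ∀ p ∈ (Finset.Icc 1 c).powersetCard 2, i ∉ p := by
          intro p hp h
          have := Finset.mem_Icc.1 ((Finset.mem_powersetCard.1 hp).1 h)
          have := Finset.mem_Icc.1 hi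
          omega
        simp only at he
        rw [← Finset.erase_insert (hip p hp), he, Finset.erase_insert (hip q hq)]
  · intro i hi j hj hij
    simp only [Function.onFun]
    rw [Finset.disjoint_left]
    intro T hT hT'
    obtain ⟨p, hp, rfl⟩ := Finset.mem_image.1 hT
    obtain ⟨q, hq, he⟩ := Finset.mem_image.1 hT'
    apply hij
    have hi' := Finset.mem_Icc.1 hi
    refine hni j hj q hq i (by omega) ?_
    rw [he]; simp

lemma card_Tcb (c b : ℕ) : (Tcb c b).card = c.choose 3 + b * c.choose 2 := by
  have : Tcb c b = (Finset.Icc 1 c).powersetCard 3 ∪ Bcb c b := rfl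
  rw [this, Finset.card_union_of_disjoint (Tcb_disj c b), card_Bcb]
  simp

lemma trace_M2 (c b : ℕ) : (Mcb c b * Mcb c b).trace
    = c.choose 3 * (3 * ((b : ℝ) + c)) + b * c.choose 2 * ((b : ℝ) + c + 2 * c + 2) := by
  unfold Matrix.trace
  simp only [Matrix.diag_apply, M2_diag]
  rw [Finset.sum_coe_sort (Tcb c b) (fun T => if T ∈ (Finset.Icc 1 c).powersetCard 3
    then 3 * ((b : ℝ) + c) else (b : ℝ) + c + 2 * c + 2)]
  have : Tcb c b = (Finset.Icc 1 c).powersetCard 3 ∪ Bcb c b := rfl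
  rw [this, Finset.sum_union (Tcb_disj c b), Finset.sum_congr rfl (fun T hT => if_pos hT),
    Finset.sum_congr rfl (fun T hT => if_neg (Bcb_big c b T hT))]
  simp [card_Bcb]
  ring

lemma trace_M (c b : ℕ) : (Mcb c b).trace = 3 * (c.choose 3 + b * c.choose 2) := by
  unfold Matrix.trace
  simp only [Matrix.diag_apply, M_diag]
  simp [card_Tcb]; ring

lemma multiset_three (s : Multiset ℝ) (α β γ : ℝ) (h : ∀ a ∈ s, a = α ∨ a = β ∨ a = γ) :
    ∃ p q r : ℕ, s = Multiset.replicate p α + Multiset.replicate q β + Multiset.replicate r γ := by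
  induction s using Multiset.induction with
  | empty => exact ⟨0, 0, 0, by simp⟩
  | cons a s ih =>
    obtain ⟨p, q, r, hs⟩ := ih (fun x hx => h x (Multiset.mem_cons_of_mem hx))
    rcases h a (Multiset.mem_cons_self a s) with rfl | rfl | rfl
    · exact ⟨p + 1, q, r, by rw [hs]; simp [Multiset.replicate_succ]⟩
    · exact ⟨p, q + 1, r, by rw [hs]; simp [Multiset.replicate_succ]⟩
    · exact ⟨p, q, r + 1, by rw [hs]; simp [Multiset.replicate_succ]⟩

lemma trace_sq {m : Type*} [Fintype m] [DecidableEq m] (M : Matrix m m ℝ) (hM : M.IsHermitian) :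
    (M * M).trace = ∑ i, hM.eigenvalues i ^ 2 := by
  have h := hM.spectral_theorem
  have h2 : M * M = Unitary.conjStarAlgAut ℝ _ hM.eigenvectorUnitary
      (diagonal (RCLike.ofReal ∘ hM.eigenvalues) * diagonal (RCLike.ofReal ∘ hM.eigenvalues)) := by
    rw [map_mul, ← h]
  rw [h2, Unitary.conjStarAlgAut_apply, Matrix.trace_mul_cycle]
  simp [Matrix.trace, pow_two]

lemma roots_three {m : Type*} [Fintype m] [DecidableEq m] (M : Matrix m m ℝ) (hM : M.IsHermitian)
    (β γ : ℝ) (hβ : β ≠ 0) (hγ : γ ≠ 0) (hβγ : β ≠ γ)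
    (hcub : ∀ h k k' : m → ℝ, k = M *ᵥ h - γ • h → k' = M *ᵥ k - β • k → M *ᵥ k' = 0)
    (p q r : ℕ) (hcard : Fintype.card m = p + q + r) (ht : M.trace = q * β + r * γ)
    (ht2 : (M * M).trace = q * β ^ 2 + r * γ ^ 2) :
    M.charpoly.roots = Multiset.replicate p 0 + Multiset.replicate q β + Multiset.replicate r γ := by
  have hev : ∀ i, hM.eigenvalues i = 0 ∨ hM.eigenvalues i = β ∨ hM.eigenvalues i = γ := by
    intro i
    set l := hM.eigenvalues i with hl
    set v : m → ℝ := ⇑(hM.eigenvectorBasis i) with hv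
    have hmv : M *ᵥ v = l • v := hM.mulVec_eigenvectorBasis i
    have hv0 : v ≠ 0 := by
      intro h0
      apply hM.eigenvectorBasis.orthonormal.ne_zero i
      ext j
      exact congrFun h0 j
    have := hcub v _ _ rfl rfl
    simp only [hmv, Matrix.mulVec_smul, smul_smul, ← sub_smul] at this
    rcases smul_eq_zero.1 this with h | h
    · have h' : l * ((l - β) * (l - γ)) = 0 := by linarith
      rcases mul_eq_zero.1 h' with h | h
      · exact Or.inl h
      rcases mul_eq_zero.1 h with h | h
      · exact Or.inr (Or.inl (by linarith))
      · exact Or.inr (Or.inr (by linarith))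
    · exact absurd h hv0
  have hroots := hM.roots_charpoly_eq_eigenvalues
  obtain ⟨p', q', r', hs⟩ := multiset_three (Multiset.map hM.eigenvalues Finset.univ.val) 0 β γ (by
    intro a ha
    obtain ⟨i, -, rfl⟩ := Multiset.mem_map.1 ha
    exact hev i)
  have c1 := congrArg Multiset.card hs
  have c2 := congrArg Multiset.sum hs
  have c3 := congrArg (fun s => (Multiset.map (fun x : ℝ => x ^ 2) s).sum) hs
  simp only [Multiset.card_map, Multiset.card_add, Multiset.card_replicate, Finset.card_val,
    Finset.card_univ] at c1
  simp only [Multiset.sum_add, Multiset.sum_replicate, nsmul_eq_mul, mul_zero, zero_add] at c2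
  simp only [Multiset.map_map, Multiset.map_add, Multiset.map_replicate, Multiset.sum_add,
    Multiset.sum_replicate, nsmul_eq_mul] at c3
  have t1 : M.trace = (Multiset.map hM.eigenvalues Finset.univ.val).sum := by
    rw [hM.trace_eq_sum_eigenvalues]; rfl
  have t2 : (M * M).trace = (Multiset.map ((fun x : ℝ => x ^ 2) ∘ hM.eigenvalues) Finset.univ.val).sum := by
    rw [trace_sq M hM]; rfl
  rw [ht, c2] at t1
  rw [ht2, c3] at t2
  have hr : (r : ℝ) = r' := by
    have : ((r : ℝ) - r') * (γ * (γ - β)) = 0 := by linear_combination t2 - β * t1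
    rcases mul_eq_zero.1 this with h | h
    · linarith
    · exact absurd h (mul_ne_zero hγ (sub_ne_zero.2 hβγ.symm))
  have hq : (q : ℝ) = q' := by
    have : ((q : ℝ) - q') * β = 0 := by rw [hr] at t1; linarith
    rcases mul_eq_zero.1 this with h | h
    · linarith
    · exact absurd h hβ
  have hr' : r = r' := by exact_mod_cast hr
  have hq' : q = q' := by exact_mod_cast hq
  have hp' : p = p' := by omega
  subst hr' hq' hp'
  rw [← hs, hroots]
  rfl

/-- The spectrum of the 2-down Laplacian `δ₁(𝒯_{c,b}) δ₁(𝒯_{c,b})ᵀ` (a square matrix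
of size `C(c,3) + b·C(c,2)`): eigenvalue `0` with multiplicity
`C(c,3) + (b-1)·C(c-1,2)`, eigenvalue `c` with multiplicity `(b-1)(c-1)`, and
eigenvalue `b + c` with multiplicity `C(c,2)`. -/
theorem stmt15 (c b : ℕ) (hc : 3 ≤ c) (hb : 1 ≤ b) :
    Fintype.card {T // T ∈ Tcb c b} = c.choose 3 + b * c.choose 2 ∧
    (delta1 (Tcb c b) * (delta1 (Tcb c b))ᵀ).charpoly.roots =
      Multiset.replicate (c.choose 3 + (b - 1) * (c - 1).choose 2) (0 : ℝ) +
      Multiset.replicate ((b - 1) * (c - 1)) (c : ℝ) +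
      Multiset.replicate (c.choose 2) ((b : ℝ) + (c : ℝ)) := by
  refine ⟨by rw [Fintype.card_coe, card_Tcb], ?_⟩
  have hM : (Mcb c b).IsHermitian := by
    have := Matrix.isHermitian_mul_conjTranspose_self (delta1 (Tcb c b))
    rwa [Matrix.conjTranspose_eq_transpose_of_trivial] at this
  obtain ⟨d, rfl⟩ : ∃ d, c = d + 1 := ⟨c - 1, by omega⟩
  obtain ⟨a, rfl⟩ : ∃ a, b = a + 1 := ⟨b - 1, by omega⟩
  simp only [Nat.add_sub_cancel]
  have q2 : (((d + 1).choose 2 : ℕ) : ℝ) = (d + 1) * d / 2 := by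
    rw [Nat.cast_choose_two]; push_cast; ring
  have q3 : (((d + 1).choose 3 : ℕ) : ℝ) * 6 = (d + 1) * d * (d - 1) := by
    have h := Nat.add_one_mul_choose_eq d 2
    have h' : ((d : ℝ) + 1) * (d.choose 2 : ℕ) = ((d + 1).choose 3 : ℕ) * 3 := by exact_mod_cast h
    rw [Nat.cast_choose_two] at h'
    linarith
  refine roots_three (Mcb (d + 1) (a + 1)) hM _ _ (by positivity) (by positivity) ?_
    (fun h k k' => M_cubic (d + 1) (a + 1) h k k') _ _ _ ?_ ?_ ?_
  · push_cast
    have : (0 : ℝ) ≤ a := by positivity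
    intro h; linarith
  · rw [Fintype.card_coe, card_Tcb]
    have := Nat.choose_succ_succ d 1
    simp only [Nat.choose_one_right, Nat.succ_eq_add_one, Nat.reduceAdd] at this
    rw [this]; ring
  · rw [trace_M]; push_cast; rw [q2]; linear_combination q3 / 2
  · rw [trace_M2]; push_cast; rw [q2]; linear_combination ((a : ℝ) + 1 + (d + 1)) * q3 / 2
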